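/- There do not exist an integer r < n(n−1)/2 and real polynomials f_1,…,f_r in the n(n−1)/2 variables (a_{pq})_{1≤p<q≤n} such that for every n×n real skew-symmetric matrix A (with above-diagonal entries a_{pq}), A ∈ S_n^{>0} holds if and only if f_i(A) > 0 for all 1 ≤ i ≤ r. In other words, the positivity test by the n(n−1)/2 minors M_{j,k} uses the fewest possible number of polynomial inequalities. -/

import Mathlib

noncomputable section

open Matrix

/-- `N = n(n-1)/2`, the number of parameters. -/
def Npar (n : ℕ) : ℕ := n * (n - 1) / 2

/-- The decreasing run `a, a-1, …, b` (empty if `b > a`). -/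
def decRun (a b : ℕ) : List ℕ := (List.range' b (a + 1 - b)).reverse

/-- The index sequence `(i_1, …, i_N)`: for `m = 1, …, ⌊n/2⌋` (here `m` is 0-based, so
`m+1` is the 1-based block index), concatenate `n`, the run `n-2, …, 2(m+1)-1`, and the
run `n-1, …, 2(m+1)`. -/
def wordD (n : ℕ) : List ℕ :=
  ((List.range (n / 2)).map (fun m =>
    n :: (decRun (n - 2) (2 * m + 1) ++ decRun (n - 1) (2 * m + 2)))).flatten

/-- The matrix `x_i(t)` (index `i` is 1-based, matrix positions are 1-based in the paper,
0-based here). -/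
def xMat (n : ℕ) (i : ℕ) (t : ℝ) : Matrix (Fin (2 * n)) (Fin (2 * n)) ℝ :=
  Matrix.of fun p q =>
    (if (p : ℕ) = (q : ℕ) then 1 else 0) +
    (if i < n then
        (if (p : ℕ) + 1 = i ∧ (q : ℕ) + 1 = i + 1 then t else 0)
      + (if (p : ℕ) + 1 = n + i + 1 ∧ (q : ℕ) + 1 = n + i then -t else 0)
     else
        (if (p : ℕ) + 1 = n - 1 ∧ (q : ℕ) + 1 = 2 * n then t else 0)
      + (if (p : ℕ) + 1 = n ∧ (q : ℕ) + 1 = 2 * n - 1 then -t else 0))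

/-- The product `x_{i_1}(t_1) ⋯ x_{i_N}(t_N)`; the parameter `t l` plays the role of
`t_{l+1}`. -/
def prodX (n : ℕ) (t : ℕ → ℝ) : Matrix (Fin (2 * n)) (Fin (2 * n)) ℝ :=
  ((List.range (Npar n)).map (fun l => xMat n ((wordD n).getD l 0) (t l))).prod

/-- The first block `X₁(t)` of the first `n` rows of the product. -/
def X1 (n : ℕ) (t : ℕ → ℝ) : Matrix (Fin n) (Fin n) ℝ :=
  Matrix.of fun p q =>
    prodX n t ⟨(p : ℕ), by have := p.isLt; omega⟩ ⟨(q : ℕ), by have := q.isLt; omega⟩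

/-- The second block `X₂(t)` of the first `n` rows of the product. -/
def X2 (n : ℕ) (t : ℕ → ℝ) : Matrix (Fin n) (Fin n) ℝ :=
  Matrix.of fun p q =>
    prodX n t ⟨(p : ℕ), by have := p.isLt; omega⟩ ⟨n + (q : ℕ), by have := q.isLt; omega⟩

/-- The skew-symmetric matrix `A(t) = X₁(t)⁻¹ · X₂(t)`. -/
def Amat (n : ℕ) (t : ℕ → ℝ) : Matrix (Fin n) (Fin n) ℝ := (X1 n t)⁻¹ * X2 n t

/-- The set `S_n^{>0}` of totally positive skew-symmetric matrices. -/
def Spos (n : ℕ) : Set (Matrix (Fin n) (Fin n) ℝ) :=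
  { A | ∃ t : ℕ → ℝ, (∀ i < Npar n, 0 < t i) ∧ A = Amat n t }

/-- The signed minor `M_{j,k}(A)`: `(-1)^{jk}` times the determinant of the submatrix of `A`
with (1-based) rows `{1,…,n-k-1} ∪ {n-k+j,…,n}` and columns `{1,…,n-j}`. -/
def Mminor (n j k : ℕ) (A : Matrix (Fin n) (Fin n) ℝ) : ℝ :=
  (-1 : ℝ) ^ (j * k) *
    Matrix.det (Matrix.of fun (p q : Fin (n - j)) =>
      A (if (p : ℕ) < n - k - 1
          then ⟨(p : ℕ), by have := p.isLt; omega⟩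
          else ⟨(p : ℕ) + j, by have := p.isLt; omega⟩)
        ⟨(q : ℕ), by have := q.isLt; omega⟩)

/-- The Pfaffian of an `m × m` matrix (intended for `m` even):
`Pf(B) = (1/(2^{m/2} (m/2)!)) Σ_σ sgn(σ) Π_i B_{σ(2i-1), σ(2i)}`. -/
def Pfaff {m : ℕ} (B : Matrix (Fin m) (Fin m) ℝ) : ℝ :=
  (1 / ((2 : ℝ) ^ (m / 2) * (Nat.factorial (m / 2) : ℝ))) *
    ∑ σ : Equiv.Perm (Fin m), ((Equiv.Perm.sign σ : ℤ) : ℝ) *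
      ∏ i : Fin (m / 2),
        B (σ ⟨2 * (i : ℕ), by have := i.isLt; omega⟩)
          (σ ⟨2 * (i : ℕ) + 1, by have := i.isLt; omega⟩)

/-- `Pf_I(A)`: the Pfaffian of the submatrix of `A` with rows and columns indexed by `I`
in increasing order. -/
def PfI {n : ℕ} (A : Matrix (Fin n) (Fin n) ℝ) (I : Finset (Fin n)) : ℝ :=
  Pfaff (Matrix.of fun (p q : Fin I.card) =>
    A ((I.orderIsoOfFin rfl p : Fin n)) ((I.orderIsoOfFin rfl q : Fin n)))

/-- `sgn(I,[n]) = (-1)^{(Σ_{i∈I} i) - |I|(|I|+1)/2}` (the elements of `I` are 1-based, so a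
0-based element `i` contributes `i+1`; the natural subtraction agrees with the integer one
since the sum of `|I|` distinct positive integers is at least `|I|(|I|+1)/2`). -/
def sgnSet {n : ℕ} (I : Finset (Fin n)) : ℝ :=
  (-1 : ℝ) ^ ((∑ i ∈ I, ((i : ℕ) + 1)) - I.card * (I.card + 1) / 2)

/-- The block matrix `[Id_n | A]`. -/
def IdA {n : ℕ} (A : Matrix (Fin n) (Fin n) ℝ) : Matrix (Fin n) (Fin (2 * n)) ℝ :=
  Matrix.of fun p q =>
    if h : (q : ℕ) < n then (if (p : ℕ) = (q : ℕ) then 1 else 0)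
    else A p ⟨(q : ℕ) - n, by have := q.isLt; omega⟩

/-- The full word `(j_1, …, j_{2N})`: `1, 2,1, 3,2,1, …, n-1,…,1` followed by `(i_1,…,i_N)`. -/
def wordFull (n : ℕ) : List ℕ :=
  (((List.range n).map (fun r => decRun r 1)).flatten) ++ wordD n

/-- `z(ε) = x_{j_1}(ε) ⋯ x_{j_{2N}}(ε)`. -/
def zeps (n : ℕ) (ε : ℝ) : Matrix (Fin (2 * n)) (Fin (2 * n)) ℝ :=
  ((wordFull n).map (fun i => xMat n i ε)).prod

/-- `Z(ε) = z(ε)ᵀ · z(ε)`. -/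
def Zeps (n : ℕ) (ε : ℝ) : Matrix (Fin (2 * n)) (Fin (2 * n)) ℝ :=
  (zeps n ε)ᵀ * zeps n ε

/-- First block `Y₁(ε)` of `[Id_n | A] · Z(ε)`. -/
def Y1 {n : ℕ} (A : Matrix (Fin n) (Fin n) ℝ) (ε : ℝ) : Matrix (Fin n) (Fin n) ℝ :=
  Matrix.of fun p q => (IdA A * Zeps n ε) p ⟨(q : ℕ), by have := q.isLt; omega⟩

/-- Second block `Y₂(ε)` of `[Id_n | A] · Z(ε)`. -/
def Y2 {n : ℕ} (A : Matrix (Fin n) (Fin n) ℝ) (ε : ℝ) : Matrix (Fin n) (Fin n) ℝ :=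
  Matrix.of fun p q => (IdA A * Zeps n ε) p ⟨n + (q : ℕ), by have := q.isLt; omega⟩

/-- The simple generators `s_i` of the Weyl group `W` of `SO(2n)`, as permutations of
`{1,…,2n}` (0-based here): for `1 ≤ i ≤ n-1`, `s_i = (i,i+1)(n+i,n+i+1)`; for `i = n`,
`s_n = (n,2n-1)(n-1,2n)`. -/
def sGen (n : ℕ) (i : ℕ) : Equiv.Perm (Fin (2 * n)) :=
  if h : 1 ≤ i ∧ i ≤ n - 1 ∧ 2 ≤ n then
    Equiv.swap ⟨i - 1, by omega⟩ ⟨i, by omega⟩ *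
      Equiv.swap ⟨n + i - 1, by omega⟩ ⟨n + i, by omega⟩
  else if h2 : i = n ∧ 2 ≤ n then
    Equiv.swap ⟨n - 1, by omega⟩ ⟨2 * n - 2, by omega⟩ *
      Equiv.swap ⟨n - 2, by omega⟩ ⟨2 * n - 1, by omega⟩
  else 1

/-- Membership in the Weyl group `W`: `σ(n+i) ≡ n + σ(i) (mod 2n)` for all `1 ≤ i ≤ n`,
and the number of `i ∈ {1,…,n}` with `σ(i) > n` is even. (All positions are 0-based; a
0-based value `v` corresponds to the 1-based value `v+1`.) -/
def inW (n : ℕ) (σ : Equiv.Perm (Fin (2 * n))) : Prop :=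
  (∀ i : Fin n,
    ((σ ⟨n + (i : ℕ), by have := i.isLt; omega⟩ : Fin (2 * n)) : ℕ)
      ≡ n + ((σ ⟨(i : ℕ), by have := i.isLt; omega⟩ : Fin (2 * n)) : ℕ) [MOD 2 * n]) ∧
  Even (Finset.univ.filter (fun i : Fin n =>
    n ≤ ((σ ⟨(i : ℕ), by have := i.isLt; omega⟩ : Fin (2 * n)) : ℕ))).card

/-- `I_w = {i ∈ {1,…,n} : w(i) > n}`, as a finset of `Fin n` (0-based). -/
def Iset (n : ℕ) (σ : Equiv.Perm (Fin (2 * n))) : Finset (Fin n) :=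
  Finset.univ.filter (fun i : Fin n =>
    n ≤ ((σ ⟨(i : ℕ), by have := i.isLt; omega⟩ : Fin (2 * n)) : ℕ))

/-- The parabolic subgroup `W_{[n-1]}` generated by `s_1, …, s_{n-1}`. -/
def Wpar (n : ℕ) : Subgroup (Equiv.Perm (Fin (2 * n))) :=
  Subgroup.closure { σ | ∃ i, 1 ≤ i ∧ i ≤ n - 1 ∧ σ = sGen n i }

/-- The standard basis vector `e_i` of `ℝ^{2n}` (with `i : Fin n` 0-based, sitting in
position `i` of the first block). -/
def evec (n : ℕ) (i : Fin n) : Fin (2 * n) → ℝ :=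
  Pi.single ⟨(i : ℕ), by have := i.isLt; omega⟩ 1

/-- The standard basis vector `f_j` of `ℝ^{2n}` (position `n + j`). -/
def fvec (n : ℕ) (j : Fin n) : Fin (2 * n) → ℝ :=
  Pi.single ⟨n + (j : ℕ), by have := j.isLt; omega⟩ 1

/-- `f = ι(f_1)⋯ι(f_n)` in the Clifford algebra. -/
def fElt {n : ℕ} (Q : QuadraticForm ℝ (Fin (2 * n) → ℝ)) : CliffordAlgebra Q :=
  (List.ofFn (fun j : Fin n => CliffordAlgebra.ι Q (fvec n j))).prod

/-- `e_S = ι(e_{l_1})⋯ι(e_{l_s})` where `l_1 < ⋯ < l_s` enumerates `S`. -/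
def eProd {n : ℕ} (Q : QuadraticForm ℝ (Fin (2 * n) → ℝ)) (S : Finset (Fin n)) :
    CliffordAlgebra Q :=
  ((S.sort (· ≤ ·)).map (fun l => CliffordAlgebra.ι Q (evec n l))).prod

/-- `h = Π_{i=1}^n ι(e_i + Σ_j A_{ij} f_j)` (product in increasing order of `i`). -/
def hElt {n : ℕ} (Q : QuadraticForm ℝ (Fin (2 * n) → ℝ)) (A : Matrix (Fin n) (Fin n) ℝ) :
    CliffordAlgebra Q :=
  (List.ofFn (fun i : Fin n =>
    CliffordAlgebra.ι Q (evec n i + ∑ j : Fin n, A i j • fvec n j))).prod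

/-- The sorted list of the (1-based) elements of `S ⊆ {1,…,n}`. -/
def valsOf {n : ℕ} (S : Finset (Fin n)) : List ℕ :=
  (S.sort (· ≤ ·)).map (fun i => (i : ℕ) + 1)

/-- The word `w_1 w_2 ⋯ w_r` where
`w_m = s_n (s_{n-2}⋯s_{i_{2m-1}}) (s_{n-1}⋯s_{i_{2m}})` and `vals` lists `i_1 < i_2 < ⋯`
(1-based); `m` is 0-based here. -/
def uWord (n r : ℕ) (vals : List ℕ) : List ℕ :=
  ((List.range r).map (fun m =>
    n :: (decRun (n - 2) (vals.getD (2 * m) 0) ++ decRun (n - 1) (vals.getD (2 * m + 1) 0)))).flatten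

/-- The permutation `u = w_1 w_2 ⋯ w_r`. -/
def uPerm (n r : ℕ) (vals : List ℕ) : Equiv.Perm (Fin (2 * n)) :=
  ((uWord n r vals).map (sGen n)).prod

/-- `L = r + Σ_{m=1}^{r} ((n-1-i_{2m-1}) + (n-i_{2m}))`. -/
def Lval (n r : ℕ) (vals : List ℕ) : ℕ :=
  r + ∑ m ∈ Finset.range r, ((n - 1 - vals.getD (2 * m) 0) + (n - vals.getD (2 * m + 1) 0))

/-!
Compose the polynomials of a hypothetical test with the parametrization `t ↦ A(t)`. At a point of
the positive orthant whose coordinates grow fast enough, the lexicographically leading monomial of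
each of the `r` composites determines its sign, also after flipping signs of coordinates. The signs
of `r` monomials are `r` characters of the group `{±1}^N`, so for `r < N` they have a nontrivial
common kernel: some point with nonzero and not all positive coordinates also passes the test.

Such a point cannot give a totally positive matrix, because `t ↦ A(t)` is injective on parameters
with nonzero coordinates. Indeed `A(t)` is a sum of wedges `u ∧ y`, one for each block of the index
sequence. The first two rows of `A(t)` involve only the first wedge, and the Schur complement of
the corresponding block is the sum of the remaining wedges; the parameters of the first block are
then read off from `u` and `y` one coordinate at a time.
-/

section SignPatterns

open Filter Polynomial

lemma eventually_atTop_eval_pos {q : ℝ[X]} (hq : 0 < q.leadingCoeff) :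
    ∀ᶠ M in atTop, 0 < q.eval M := by
  rcases q.natDegree.eq_zero_or_pos with hdeg | hdeg
  · rw [eq_C_of_natDegree_eq_zero hdeg] at hq ⊢
    exact .of_forall fun M => by simpa using hq
  · exact (q.tendsto_atTop_of_leadingCoeff_nonneg (natDegree_pos_iff_degree_pos.1 hdeg)
      hq.le).eventually_gt_atTop 0

lemma eventually_atTop_eval_units_smul_pos {q : ℝ[X]} {c : ℝ} (hc : 0 < c * q.leadingCoeff)
    (s : ℤˣ) : ∀ᶠ M : ℝ in atTop, 0 < s ^ q.natDegree • (c * q.eval (s • M)) := by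
  have hs : ((s : ℤ) : ℝ) ≠ 0 := by simp
  have hsq : (((s : ℤ) : ℝ) ^ q.natDegree) * ((s : ℤ) : ℝ) ^ q.natDegree = 1 := by
    rw [← mul_pow, ← Int.cast_mul, Int.units_coe_mul_self, Int.cast_one, one_pow]
  let twisted : ℝ[X] := C (((s : ℤ) : ℝ) ^ q.natDegree * c) * q.comp (C ((s : ℤ) : ℝ) * X)
  have hlead : twisted.leadingCoeff = c * q.leadingCoeff := by
    rw [leadingCoeff_mul, leadingCoeff_C,
      leadingCoeff_comp (by rw [natDegree_C_mul_X _ hs]; exact one_ne_zero), leadingCoeff_C_mul_X]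
    linear_combination c * q.leadingCoeff * hsq
  filter_upwards [eventually_atTop_eval_pos (hlead ▸ hc)] with M hM
  simpa [twisted, Units.smul_def, mul_assoc] using hM

lemma eval_ne_zero_of_isEmpty {σ R : Type*} [IsEmpty σ] [CommSemiring R] {p : MvPolynomial σ R}
    (hp : p ≠ 0) (x : σ → R) : MvPolynomial.eval x p ≠ 0 := by
  rw [MvPolynomial.eq_C_of_isEmpty p] at hp ⊢
  rwa [MvPolynomial.eval_C, ne_eq, ← MvPolynomial.C_eq_zero (σ := σ)]

-- The exponents `a i` are those of the lexicographically leading monomial of `F i`: a point whose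
-- coordinates grow fast enough makes that monomial dominate on every orthant simultaneously.
lemma exists_pos_eval_units_smul_pos {ι : Type*} [Finite ι] {N : ℕ}
    (F : ι → MvPolynomial (Fin N) ℝ) (hF : ∀ i, F i ≠ 0) :
    ∃ ε : Fin N → ℝ, (∀ j, 0 < ε j) ∧ ∃ (a : ι → Fin N → ℕ) (c : ι → ℝ),
      ∀ i (σ : Fin N → ℤˣ),
        0 < (∏ j, σ j ^ a i j) • (c i * MvPolynomial.eval (fun j => σ j • ε j) (F i)) := by
  induction N with
  | zero =>
    refine ⟨0, isEmptyElim, fun _ => isEmptyElim, fun i => MvPolynomial.eval 0 (F i),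
      fun i σ => ?_⟩
    rw [Finset.univ_eq_empty, Finset.prod_empty, one_smul,
      Subsingleton.elim (fun j => σ j • (0 : Fin 0 → ℝ) j) 0]
    exact mul_self_pos.2 (eval_ne_zero_of_isEmpty (hF i) 0)
  | succ N ih =>
    let P i := MvPolynomial.finSuccEquiv ℝ N (F i)
    have hP i : P i ≠ 0 := by simpa [P] using hF i
    obtain ⟨ε, hε, a, c, hlead⟩ := ih (fun i => (P i).leadingCoeff)
      (fun i => leadingCoeff_ne_zero.2 (hP i))
    have hlarge : ∀ᶠ M : ℝ in atTop, ∀ (i : ι) (σ : Fin N → ℤˣ) (s : ℤˣ),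
        0 < s ^ (P i).natDegree • (((∏ j, σ j ^ a i j) • c i) *
          ((P i).map (MvPolynomial.eval fun j => σ j • ε j)).eval (s • M)) := by
      simp only [eventually_all]
      intro i σ s
      have hpos := hlead i σ
      have hne : MvPolynomial.eval (fun j => σ j • ε j) (P i).leadingCoeff ≠ 0 := by
        intro h0
        simp [h0] at hpos
      rw [← natDegree_map_of_leadingCoeff_ne_zero _ hne]
      refine eventually_atTop_eval_units_smul_pos ?_ s
      rwa [leadingCoeff_map_of_leadingCoeff_ne_zero _ hne, smul_mul_assoc]
    obtain ⟨M, hM, hMpos⟩ := (hlarge.and (eventually_gt_atTop 0)).exists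
    refine ⟨Fin.cons M ε, Fin.cases hMpos hε, fun i => Fin.cons (P i).natDegree (a i), c,
      fun i σ => ?_⟩
    have hcons : (fun j => σ j • (Fin.cons M ε : Fin (N + 1) → ℝ) j) =
        Fin.cons (σ 0 • M) fun j : Fin N => σ j.succ • ε j := by
      ext j
      cases j using Fin.cases <;> rfl
    rw [hcons, MvPolynomial.eval_eq_eval_mv_eval', Fin.prod_univ_succ, mul_smul,
      ← smul_mul_assoc]
    exact hM i (fun j => σ j.succ) (σ 0)

lemma exists_ne_one_forall_prod_pow_eq_one {ι κ : Type*} [Fintype ι] [Fintype κ]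
    (h : Fintype.card ι < Fintype.card κ) (a : ι → κ → ℕ) :
    ∃ σ : κ → ℤˣ, σ ≠ 1 ∧ ∀ i, ∏ j, σ j ^ a i j = 1 := by
  classical
  have hcard : Fintype.card (ι → ℤˣ) < Fintype.card (κ → ℤˣ) := by
    simpa only [Fintype.card_fun, Fintype.card_units_int] using
      Nat.pow_lt_pow_right one_lt_two h
  obtain ⟨σ, τ, hne, heq⟩ := Fintype.exists_ne_map_eq_of_card_lt
    (fun (σ : κ → ℤˣ) i => ∏ j, σ j ^ a i j) hcard
  refine ⟨σ / τ, fun h1 => hne (div_eq_one.1 h1), fun i => ?_⟩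
  simp only [Pi.div_apply, div_pow, Finset.prod_div_distrib, congrFun heq i, div_self']

theorem exists_neg_coord_forall_eval_pos {ι : Type*} [Fintype ι] {N : ℕ}
    (h : Fintype.card ι < N) (F : ι → MvPolynomial (Fin N) ℝ)
    (hF : ∀ t : Fin N → ℝ, (∀ j, 0 < t j) → ∀ i, 0 < MvPolynomial.eval t (F i)) :
    ∃ t : Fin N → ℝ, (∀ j, t j ≠ 0) ∧ (∃ j, t j < 0) ∧ ∀ i, 0 < MvPolynomial.eval t (F i) := by
  have hF0 i : F i ≠ 0 := by
    intro h0
    simpa [h0] using hF 1 (fun _ => one_pos) i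
  obtain ⟨ε, hε, a, c, hsign⟩ := exists_pos_eval_units_smul_pos F hF0
  obtain ⟨σ, hσ, hσa⟩ := exists_ne_one_forall_prod_pow_eq_one (by simpa using h) a
  obtain ⟨j, hj⟩ := Function.ne_iff.1 hσ
  refine ⟨fun j => σ j • ε j, fun j => smul_ne_zero_iff_ne (σ j) |>.2 (hε j).ne', ⟨j, ?_⟩,
    fun i => ?_⟩
  · simpa [(Int.units_eq_one_or (σ j)).resolve_left hj] using hε j
  · have hc : 0 < c i := by
      have hpos := hsign i 1
      simp only [Pi.one_apply, one_pow, Finset.prod_const_one, one_smul] at hpos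
      exact pos_of_mul_pos_left hpos (hF ε hε i).le
    have hpos := hsign i σ
    rw [hσa, one_smul] at hpos
    exact pos_of_mul_pos_right hpos hc.le

end SignPatterns

section ShearWords

variable {R : Type*} [CommRing R] {n : ℕ}

/-- The elementary operation `v_i ↦ v_i - t v_{i+1}` on vectors, which is the inverse of the upper
left block of `x_i(t)`; it is the identity for `i ≥ n`. Vectors carry the 1-based coordinates of the
paper inside `ℕ → R`, so that index arithmetic needs no bound proofs. -/
def shear (n i : ℕ) (t : R) : (ℕ → R) →ₗ[R] (ℕ → R) where
  toFun v p := v p - if i < n ∧ p = i then t * v (p + 1) else 0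
  map_add' v w := by
    ext p
    simp only [Pi.add_apply]
    split_ifs <;> ring
  map_smul' c v := by
    ext p
    simp only [Pi.smul_apply, smul_eq_mul, RingHom.id_apply]
    split_ifs <;> ring

lemma shear_apply (n i : ℕ) (t : R) (v : ℕ → R) (p : ℕ) :
    shear n i t v p = v p - if i < n ∧ p = i then t * v (p + 1) else 0 :=
  rfl

/-- The composite of the shears of a word `(i₁, t₁), …, (i_k, t_k)`, the first letter acting
first. -/
def shearWord (n : ℕ) : List (ℕ × R) → (ℕ → R) →ₗ[R] (ℕ → R)
  | [] => LinearMap.id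
  | x :: L => shearWord n L ∘ₗ shear n x.1 x.2

lemma shearWord_cons (x : ℕ × R) (L : List (ℕ × R)) (v : ℕ → R) :
    shearWord n (x :: L) v = shearWord n L (shear n x.1 x.2 v) :=
  rfl

lemma shearWord_append (L M : List (ℕ × R)) (v : ℕ → R) :
    shearWord n (L ++ M) v = shearWord n M (shearWord n L v) := by
  induction L generalizing v with
  | nil => rfl
  | cons _ _ ih => exact ih _

lemma shear_injective (i : ℕ) (t : R) : Function.Injective (shear n i t) := by
  rw [injective_iff_map_eq_zero]
  intro v hv
  have hsucc : v (i + 1) = 0 := by simpa [shear_apply] using congrFun hv (i + 1)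
  ext p
  have hp := congrFun hv p
  rw [shear_apply] at hp
  split_ifs at hp with h
  · simpa [h.2, hsucc] using hp
  · simpa using hp

lemma shearWord_injective (L : List (ℕ × R)) : Function.Injective (shearWord n L) := by
  induction L with
  | nil => exact Function.injective_id
  | cons x L ih => exact ih.comp (shear_injective x.1 x.2)

lemma shearWord_apply_of_forall_ne {L : List (ℕ × R)} {p : ℕ} (h : ∀ x ∈ L, x.1 ≠ p)
    (v : ℕ → R) : shearWord n L v p = v p := by
  induction L generalizing v with
  | nil => rfl
  | cons x L ih =>
    rw [List.forall_mem_cons] at h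
    rw [shearWord_cons, ih h.2, shear_apply, if_neg fun hx => h.1 hx.2.symm, sub_zero]

lemma shearWord_single_of_forall_ne {L : List (ℕ × R)} {k : ℕ} (h : ∀ x ∈ L, x.1 + 1 ≠ k)
    (c : R) : shearWord n L (Pi.single k c) = Pi.single k c := by
  induction L with
  | nil => rfl
  | cons x L ih =>
    rw [List.forall_mem_cons] at h
    have hfix : shear n x.1 x.2 (Pi.single k c) = Pi.single k c := by
      ext p
      rw [shear_apply, ite_eq_right_iff.2, sub_zero]
      rintro ⟨-, rfl⟩
      rw [Pi.single_eq_of_ne h.1, mul_zero]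
    rw [shearWord_cons, hfix, ih h.2]

lemma shearWord_apply_eq_zero {S : Set ℕ} {L : List (ℕ × R)} (hL : ∀ x ∈ L, x.1 ∈ S)
    {v : ℕ → R} (hv : ∀ p ∉ S, v p = 0) {p : ℕ} (hp : p ∉ S) : shearWord n L v p = 0 := by
  rw [shearWord_apply_of_forall_ne (p := p) fun x hx hxp => hp (hxp ▸ hL x hx), hv p hp]

lemma map_shearWord {R' : Type*} [CommRing R'] (φ : R →+* R') (L : List (ℕ × R)) (v : ℕ → R) :
    φ ∘ shearWord n L v = shearWord n (L.map (Prod.map id φ)) (φ ∘ v) := by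
  induction L generalizing v with
  | nil => rfl
  | cons x L ih =>
    have hshear : φ ∘ shear n x.1 x.2 v = shear n x.1 (φ x.2) (φ ∘ v) := by
      ext p
      simp only [Function.comp_apply, shear_apply]
      split_ifs <;> simp
    rw [shearWord_cons, ih, hshear]
    rfl

end ShearWords

section DecreasingRuns

lemma mem_decRun {a b i : ℕ} : i ∈ decRun a b ↔ b ≤ i ∧ i ≤ a := by
  simp only [decRun, List.mem_reverse, List.mem_range'_1]
  omega

lemma decRun_eq_nil {a b : ℕ} (h : a < b) : decRun a b = [] := by
  simp [decRun, Nat.sub_eq_zero_of_le h]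

lemma decRun_eq_cons {a b : ℕ} (hb : 1 ≤ b) (h : b ≤ a) : decRun a b = a :: decRun (a - 1) b := by
  obtain ⟨d, rfl⟩ := Nat.exists_eq_add_of_le h
  have hlen : b + d + 1 - b = d + 1 ∧ b + d - 1 + 1 - b = d := by omega
  rw [decRun, decRun, hlen.1, hlen.2, List.range'_concat]
  simp

lemma length_decRun (a b : ℕ) : (decRun a b).length = a + 1 - b := by
  simp [decRun]

lemma forall_mem_of_map_fst_eq_decRun {R : Type*} {L : List (ℕ × R)} {a b : ℕ}
    (hL : L.map Prod.fst = decRun a b) : ∀ x ∈ L, b ≤ x.1 ∧ x.1 ≤ a :=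
  fun _ hx => mem_decRun.1 (hL ▸ List.mem_map_of_mem hx)

lemma exists_eq_cons_of_map_fst_eq_decRun {R : Type*} {L : List (ℕ × R)} {a b : ℕ} (hb : 1 ≤ b)
    (hab : b ≤ a) (hL : L.map Prod.fst = decRun a b) :
    ∃ t L', L = (a, t) :: L' ∧ L'.map Prod.fst = decRun (a - 1) b := by
  rw [decRun_eq_cons hb hab] at hL
  obtain ⟨⟨_, t⟩, L', rfl, rfl, hL'⟩ := List.map_eq_cons_iff.1 hL
  exact ⟨t, L', rfl, hL'⟩

section CommRing

variable {R : Type*} [CommRing R] {n k : ℕ}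

lemma shearWord_cons_single_succ (hk : k < n) {L : List (ℕ × R)} (hL : ∀ x ∈ L, x.1 ≠ k)
    (t c : R) :
    shearWord n ((k, t) :: L) (Pi.single (k + 1) c) =
      Pi.single (k + 1) c + shearWord n L (Pi.single k (-(t * c))) := by
  have hstep : shear n k t (Pi.single (k + 1) c) =
      Pi.single (k + 1) c + Pi.single k (-(t * c)) := by
    ext p
    rcases eq_or_ne p k with rfl | hp
    · simp [shear_apply, hk]
    · simp [shear_apply, hp]
  rw [shearWord_cons, hstep, map_add, shearWord_single_of_forall_ne]
  simpa using hL

lemma shearWord_run_single_apply_self {b : ℕ} {L : List (ℕ × R)}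
    (hL : L.map Prod.fst = decRun (k - 1) b) (hk : 1 ≤ k) (c : R) :
    shearWord n L (Pi.single k c) k = c := by
  rw [shearWord_apply_of_forall_ne, Pi.single_eq_same]
  intro x hx
  have := forall_mem_of_map_fst_eq_decRun hL x hx
  omega

lemma exists_shearWord_run_single_succ {b : ℕ} (hb : 1 ≤ b) (hbk : b ≤ k) (hk : k < n)
    {L : List (ℕ × R)} (hL : L.map Prod.fst = decRun k b) :
    ∃ t L', L = (k, t) :: L' ∧ L'.map Prod.fst = decRun (k - 1) b ∧ ∀ c,
      shearWord n L (Pi.single (k + 1) c) =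
        Pi.single (k + 1) c + shearWord n L' (Pi.single k (-(t * c))) := by
  obtain ⟨t, L', rfl, hL'⟩ := exists_eq_cons_of_map_fst_eq_decRun hb hbk hL
  refine ⟨t, L', rfl, hL', shearWord_cons_single_succ hk (fun x hx => ?_) t⟩
  have := forall_mem_of_map_fst_eq_decRun hL' x hx
  omega

variable [IsDomain R]

lemma shearWord_run_single_apply_ne_zero {b : ℕ} (hb : 1 ≤ b) (hbk : b ≤ k) (hk : k ≤ n)
    {L : List (ℕ × R)} (hL : L.map Prod.fst = decRun (k - 1) b) (hL0 : ∀ x ∈ L, x.2 ≠ 0)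
    {c : R} (hc : c ≠ 0) : shearWord n L (Pi.single k c) b ≠ 0 := by
  induction k, hbk using Nat.le_induction generalizing L c with
  | base => rwa [shearWord_run_single_apply_self hL hb]
  | succ k hbk ih =>
    obtain ⟨t, L, rfl, hL', hstep⟩ := exists_shearWord_run_single_succ hb hbk hk hL
    rw [List.forall_mem_cons] at hL0
    rw [hstep, Pi.add_apply, Pi.single_eq_of_ne (by omega), zero_add]
    exact ih (by omega) hL' hL0.2 (neg_ne_zero.2 (mul_ne_zero hL0.1 hc))

lemma eq_of_shearWord_run_single_eq {b : ℕ} (hb : 1 ≤ b) (hbk : b ≤ k) (hk : k ≤ n)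
    {L L' : List (ℕ × R)} (hL : L.map Prod.fst = decRun (k - 1) b)
    (hL' : L'.map Prod.fst = decRun (k - 1) b) (hL0 : ∀ x ∈ L, x.2 ≠ 0) {c c' : R} (hc : c ≠ 0)
    (h : shearWord n L (Pi.single k c) = shearWord n L' (Pi.single k c')) :
    c = c' ∧ L = L' := by
  have hcc : c = c' := by
    simpa only [shearWord_run_single_apply_self hL (hb.trans hbk),
      shearWord_run_single_apply_self hL' (hb.trans hbk)] using congrFun h k
  subst hcc
  refine ⟨rfl, ?_⟩
  induction k, hbk using Nat.le_induction generalizing L L' c with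
  | base =>
    rw [decRun_eq_nil (by omega), List.map_eq_nil_iff] at hL hL'
    rw [hL, hL']
  | succ k hbk ih =>
    obtain ⟨t, L, rfl, hrun, hstep⟩ := exists_shearWord_run_single_succ hb hbk hk hL
    obtain ⟨t', L', rfl, hrun', hstep'⟩ := exists_shearWord_run_single_succ hb hbk hk hL'
    rw [List.forall_mem_cons] at hL0
    rw [hstep, hstep', add_right_inj] at h
    have htt : t = t' := by
      have hk' := congrFun h k
      rw [shearWord_run_single_apply_self hrun (hb.trans hbk),
        shearWord_run_single_apply_self hrun' (hb.trans hbk)] at hk'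
      exact mul_right_cancel₀ hc (neg_inj.1 hk')
    subst htt
    rw [ih (by omega) hrun hrun' hL0.2 (neg_ne_zero.2 (mul_ne_zero hL0.1 hc)) h]

end CommRing

end DecreasingRuns

section SkewForms

variable {R : Type*} [CommRing R] {n : ℕ}

/-- The alternating form `u ∧ y` as the array of its coordinates. -/
def wedge (u y : ℕ → R) (p q : ℕ) : R :=
  u p * y q - u q * y p

lemma wedge_swap (u y : ℕ → R) (p q : ℕ) : wedge u y q p = -wedge u y p q := by
  rw [wedge, wedge]
  ring

lemma wedge_apply_eq_zero {u y : ℕ → R} {p : ℕ} (hu : u p = 0) (hy : y p = 0) :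
    wedge u y p = 0 := by
  ext q
  simp [wedge, hu, hy]

lemma apply_smul_eq_of_wedge_eq {u y u' y' : ℕ → R} {a : ℕ} (hy : y a = 0) (hy' : y' a = 0)
    (h : wedge u y = wedge u' y') : u a • y = u' a • y' := by
  ext q
  simpa [wedge, hy, hy'] using congrFun₂ h a q

-- The right-hand side is the Schur complement in `B` of the block indexed by `{a, b}`.
lemma eq_schurComplement_of_eq_wedge_add {K : Type*} [Field K] {u y : ℕ → K} {B C : ℕ → ℕ → K}
    {a b : ℕ} (hB : B = wedge u y + C) (hya : y a = 0) (hyb : y b ≠ 0) (hua : u a ≠ 0)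
    (hCa : C a = 0) (hCb : C b = 0) (p q : ℕ) :
    C p q = B p q - (B a p * B b q - B a q * B b p) / B a b := by
  simp only [hB, Pi.add_apply, wedge, hCa, hCb, hya, Pi.zero_apply]
  field_simp
  ring

lemma exists_eq_add_smul_of_wedge_eq {K : Type*} [Field K] {u u' y : ℕ → K} {b : ℕ}
    (hyb : y b ≠ 0) (h : wedge u y = wedge u' y) : ∃ c : K, u = u' + c • y := by
  refine ⟨(u b - u' b) / y b, funext fun q => ?_⟩
  have hbq := congrFun₂ h b q
  simp only [wedge] at hbq
  rw [Pi.add_apply, Pi.smul_apply, smul_eq_mul]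
  field_simp
  linear_combination -hbq

/-- The alternating form `X₁⁻¹ X₂` of the product `[X₁ | X₂]` of the matrices `x_i(t)` over the
letters `(i, t)` of a word: a letter `n` contributes `t e_{n-1} ∧ e_n`, transported by the shears of
the letters to its right. -/
def skewForm (n : ℕ) : List (ℕ × R) → ℕ → ℕ → R
  | [] => 0
  | x :: L => (if x.1 < n then 0 else
      wedge (shearWord n L (Pi.single (n - 1) x.2)) (shearWord n L (Pi.single n 1))) + skewForm n L

lemma skewForm_cons_of_lt {i : ℕ} (hi : i < n) (t : R) (L : List (ℕ × R)) :
    skewForm n ((i, t) :: L) = skewForm n L := by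
  rw [skewForm, if_pos hi, zero_add]

lemma skewForm_cons_of_le {i : ℕ} (hi : n ≤ i) (t : R) (L : List (ℕ × R)) :
    skewForm n ((i, t) :: L) =
      wedge (shearWord n L (Pi.single (n - 1) t)) (shearWord n L (Pi.single n 1)) +
        skewForm n L := by
  rw [skewForm, if_neg hi.not_gt]

lemma skewForm_append_of_forall_lt {L M : List (ℕ × R)} (hL : ∀ x ∈ L, x.1 < n) :
    skewForm n (L ++ M) = skewForm n M := by
  induction L with
  | nil => rfl
  | cons x L ih =>
    rw [List.forall_mem_cons] at hL
    rw [List.cons_append, skewForm_cons_of_lt hL.1, ih hL.2]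

lemma skewForm_swap (L : List (ℕ × R)) (p q : ℕ) : skewForm n L q p = -skewForm n L p q := by
  induction L with
  | nil => simp [skewForm]
  | cons x L ih =>
    simp only [skewForm, Pi.add_apply, ih]
    split_ifs
    · simp
    · rw [wedge_swap, neg_add]

lemma skewForm_apply_eq_zero {S : Set ℕ} {L : List (ℕ × R)}
    (hL : ∀ x ∈ L, x.1 ∈ S ∧ n - 1 ∈ S ∧ n ∈ S) {p : ℕ} (hp : p ∉ S) : skewForm n L p = 0 := by
  induction L with
  | nil => rfl
  | cons x L ih =>
    rw [List.forall_mem_cons] at hL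
    have hsingle {k : ℕ} (hk : k ∈ S) (c : R) : shearWord n L (Pi.single k c) p = 0 := by
      refine shearWord_apply_eq_zero (fun y hy => (hL.2 y hy).1) (fun q hq => ?_) hp
      rw [Pi.single_eq_of_ne (ne_of_mem_of_not_mem hk hq).symm]
    rw [skewForm, Pi.add_apply, ih hL.2, add_zero]
    split_ifs
    · rfl
    · exact wedge_apply_eq_zero (hsingle hL.1.2.1 _) (hsingle hL.1.2.2 _)

lemma map_skewForm {R' : Type*} [CommRing R'] (φ : R →+* R') (L : List (ℕ × R)) (p q : ℕ) :
    φ (skewForm n L p q) = skewForm n (L.map (Prod.map id φ)) p q := by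
  induction L with
  | nil => simp [skewForm]
  | cons x L ih =>
    have hsingle (k : ℕ) (c : R) (r : ℕ) : φ (shearWord n L (Pi.single k c) r) =
        shearWord n (L.map (Prod.map id φ)) (Pi.single k (φ c)) r := by
      have hφ : φ ∘ (Pi.single k c : ℕ → R) = Pi.single k (φ c) :=
        (Pi.single_op (fun _ => φ) (fun _ => map_zero φ) k c).symm
      rw [← hφ, ← map_shearWord, Function.comp_apply]
    simp only [List.map_cons, skewForm, Prod.map_fst, Prod.map_snd, id_eq, Pi.add_apply, map_add,
      ih]
    split_ifs
    · simp
    · simp only [wedge, map_sub, map_mul, hsingle, map_one]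

end SkewForms

section Words

/-- The block with 0-based index `m` of the index sequence `wordD n`. -/
def wordBlock (n m : ℕ) : List ℕ :=
  n :: (decRun (n - 2) (2 * m + 1) ++ decRun (n - 1) (2 * m + 2))

/-- The index sequence `wordD n` without its first `m` blocks. -/
def wordTail (n m : ℕ) : List ℕ :=
  ((List.range' m (n / 2 - m)).map (wordBlock n)).flatten

lemma wordTail_zero (n : ℕ) : wordTail n 0 = wordD n := by
  rw [wordTail, ← List.range_eq_range']
  rfl

lemma wordTail_of_lt {n m : ℕ} (h : m < n / 2) :
    wordTail n m = wordBlock n m ++ wordTail n (m + 1) := by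
  have hlen : n / 2 - m = n / 2 - (m + 1) + 1 := by omega
  rw [wordTail, hlen, List.range'_succ, List.map_cons, List.flatten_cons, wordTail]

lemma wordTail_of_le {n m : ℕ} (h : n / 2 ≤ m) : wordTail n m = [] := by
  simp [wordTail, Nat.sub_eq_zero_of_le h]

lemma bounds_of_mem_wordTail {n m i : ℕ} (hi : i ∈ wordTail n m) :
    2 * m < i ∧ i ≤ n ∧ 2 * m + 1 < n := by
  simp only [wordTail, wordBlock, List.mem_flatten, List.mem_map, List.mem_range'_1] at hi
  obtain ⟨_, ⟨j, hj, rfl⟩, hi⟩ := hi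
  simp only [List.mem_cons, List.mem_append, mem_decRun] at hi
  omega

lemma length_wordBlock_add {n m : ℕ} (h : 2 * m + 2 ≤ n) :
    (wordBlock n m).length + (4 * m + 3) = 2 * n := by
  simp only [wordBlock, List.length_cons, List.length_append, length_decRun]
  omega

lemma length_flatten_wordBlocks_add {n k : ℕ} (hk : 2 * k ≤ n) :
    (((List.range k).map (wordBlock n)).flatten).length + k * (2 * k + 1) = 2 * n * k := by
  induction k with
  | zero => rfl
  | succ k ih =>
    have hblock := length_wordBlock_add hk
    rw [List.range_succ, List.map_append, List.flatten_append, List.length_append,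
      List.map_singleton, List.flatten_singleton]
    linear_combination ih (by omega) + hblock

lemma length_wordD (n : ℕ) : (wordD n).length = Npar n := by
  have hlen : (wordD n).length + n / 2 * (2 * (n / 2) + 1) = 2 * n * (n / 2) :=
    length_flatten_wordBlocks_add (Nat.mul_div_le n 2)
  rw [Npar]
  rcases n.even_or_odd' with ⟨k, rfl | rfl⟩
  · rw [show 2 * k / 2 = k by omega] at hlen
    rw [mul_assoc, Nat.mul_div_cancel_left _ two_pos]
    cases k with
    | zero => simpa using hlen
    | succ k =>
      rw [show 2 * (k + 1) - 1 = 2 * k + 1 by omega]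
      linear_combination hlen
  · rw [show (2 * k + 1) / 2 = k by omega] at hlen
    rw [Nat.add_sub_cancel, mul_left_comm, Nat.mul_div_cancel_left _ two_pos]
    linear_combination hlen

end Words

section Injectivity

/-- A word with nonzero parameters over the index sequence `wordTail n m`, split after the letter
`n`, the two runs of its first block, and the remaining blocks. -/
structure LeadingBlock (K : Type*) [Field K] (n m : ℕ) where
  param : K
  run₁ : List (ℕ × K)
  run₂ : List (ℕ × K)
  rest : List (ℕ × K)
  lt_half : m < n / 2
  map_fst_run₁ : run₁.map Prod.fst = decRun (n - 2) (2 * m + 1)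
  map_fst_run₂ : run₂.map Prod.fst = decRun (n - 1) (2 * m + 2)
  map_fst_rest : rest.map Prod.fst = wordTail n (m + 1)
  param_ne_zero : param ≠ 0
  run₁_ne_zero : ∀ x ∈ run₁, x.2 ≠ 0
  run₂_ne_zero : ∀ x ∈ run₂, x.2 ≠ 0
  rest_ne_zero : ∀ x ∈ rest, x.2 ≠ 0

namespace LeadingBlock

variable {K : Type*} [Field K] {n m : ℕ} (D D' : LeadingBlock K n m)

/-- The word that is split. -/
def word : List (ℕ × K) :=
  (n, D.param) :: (D.run₁ ++ (D.run₂ ++ D.rest))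

/-- The left factor of the wedge that the first block contributes to `skewForm n D.word`. -/
def left : ℕ → K :=
  shearWord n (D.run₂ ++ D.rest) (shearWord n D.run₁ (Pi.single (n - 1) D.param))

/-- The right factor of the wedge that the first block contributes to `skewForm n D.word`. -/
def right : ℕ → K :=
  shearWord n (D.run₂ ++ D.rest) (Pi.single n 1)

lemma bounds_of_mem_run₁ {x : ℕ × K} (hx : x ∈ D.run₁) : 2 * m + 1 ≤ x.1 ∧ x.1 ≤ n - 2 :=
  forall_mem_of_map_fst_eq_decRun D.map_fst_run₁ x hx

lemma bounds_of_mem_run₂ {x : ℕ × K} (hx : x ∈ D.run₂) : 2 * m + 2 ≤ x.1 ∧ x.1 ≤ n - 1 :=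
  forall_mem_of_map_fst_eq_decRun D.map_fst_run₂ x hx

lemma bounds_of_mem_rest {x : ℕ × K} (hx : x ∈ D.rest) : 2 * m + 2 < x.1 ∧ 2 * m + 3 < n := by
  have := bounds_of_mem_wordTail (D.map_fst_rest ▸ List.mem_map_of_mem (f := Prod.fst) hx)
  omega

lemma two_mul_add_two_le (D : LeadingBlock K n m) : 2 * m + 2 ≤ n := by
  have := D.lt_half
  omega

lemma ne_of_mem_run₂_append_rest {x : ℕ × K} (hx : x ∈ D.run₂ ++ D.rest) : x.1 ≠ 2 * m + 1 := by
  rcases List.mem_append.1 hx with hx | hx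
  · have := D.bounds_of_mem_run₂ hx
    omega
  · have := D.bounds_of_mem_rest hx
    omega

lemma right_apply_eq_zero : D.right (2 * m + 1) = 0 := by
  have := D.two_mul_add_two_le
  rw [right, shearWord_apply_of_forall_ne fun _ => D.ne_of_mem_run₂_append_rest,
    Pi.single_eq_of_ne (by omega)]

lemma left_apply_ne_zero : D.left (2 * m + 1) ≠ 0 := by
  have := D.two_mul_add_two_le
  rw [left, shearWord_apply_of_forall_ne fun _ => D.ne_of_mem_run₂_append_rest]
  exact shearWord_run_single_apply_ne_zero (k := n - 1) (by omega) (by omega) (by omega)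
    D.map_fst_run₁ D.run₁_ne_zero D.param_ne_zero

lemma right_apply_ne_zero : D.right (2 * m + 2) ≠ 0 := by
  rw [right, shearWord_append, shearWord_apply_of_forall_ne fun x hx => by
    have := D.bounds_of_mem_rest hx
    omega]
  exact shearWord_run_single_apply_ne_zero (by omega) D.two_mul_add_two_le le_rfl D.map_fst_run₂
    D.run₂_ne_zero one_ne_zero

lemma skewForm_rest_apply {p : ℕ} (hp : p ≤ 2 * m + 2) : skewForm n D.rest p = 0 := by
  refine skewForm_apply_eq_zero (S := Set.Ioi (2 * m + 2)) (fun x hx => ?_) (by simpa using hp)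
  have := D.bounds_of_mem_rest hx
  simp only [Set.mem_Ioi]
  omega

lemma skewForm_word : skewForm n D.word = wedge D.left D.right + skewForm n D.rest := by
  have hn := D.two_mul_add_two_le
  have hlt : ∀ x ∈ D.run₁ ++ D.run₂, x.1 < n := by
    intro x hx
    rcases List.mem_append.1 hx with hx | hx
    · have := D.bounds_of_mem_run₁ hx
      omega
    · have := D.bounds_of_mem_run₂ hx
      omega
  have hfix : shearWord n D.run₁ (Pi.single n (1 : K)) = Pi.single n 1 := by
    refine shearWord_single_of_forall_ne (fun x hx => ?_) 1
    have := D.bounds_of_mem_run₁ hx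
    omega
  rw [word, skewForm_cons_of_le le_rfl, shearWord_append, shearWord_append D.run₁, hfix,
    ← List.append_assoc, skewForm_append_of_forall_lt hlt, left, right]

variable {D D'}

lemma skewForm_rest_eq (h : skewForm n D.word = skewForm n D'.word) :
    skewForm n D.rest = skewForm n D'.rest := by
  ext p q
  have hrow (E : LeadingBlock K n m) := eq_schurComplement_of_eq_wedge_add E.skewForm_word
    E.right_apply_eq_zero E.right_apply_ne_zero E.left_apply_ne_zero
    (E.skewForm_rest_apply (by omega)) (E.skewForm_rest_apply le_rfl) p q
  rw [hrow D, hrow D', h]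

lemma run₂_eq (hwedge : wedge D.left D.right = wedge D'.left D'.right) (hrest : D.rest = D'.rest) :
    D.run₂ = D'.run₂ := by
  have hrow := apply_smul_eq_of_wedge_eq D.right_apply_eq_zero D'.right_apply_eq_zero hwedge
  have hright (E : LeadingBlock K n m) (c : K) :
      c • E.right = shearWord n E.rest (shearWord n E.run₂ (Pi.single n c)) := by
    rw [right, ← map_smul, ← Pi.single_smul, smul_eq_mul, mul_one, shearWord_append]
  rw [hright, hright, hrest] at hrow
  exact (eq_of_shearWord_run_single_eq (by omega) D.two_mul_add_two_le le_rfl D.map_fst_run₂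
    D'.map_fst_run₂ D.run₂_ne_zero D.left_apply_ne_zero (shearWord_injective _ hrow)).2

lemma param_eq_and_run₁_eq (hwedge : wedge D.left D.right = wedge D'.left D'.right)
    (hrest : D.rest = D'.rest) (hrun₂ : D.run₂ = D'.run₂) :
    D.param = D'.param ∧ D.run₁ = D'.run₁ := by
  have hn := D.two_mul_add_two_le
  have hright : D.right = D'.right := by rw [right, right, hrest, hrun₂]
  rw [hright] at hwedge
  obtain ⟨c, hc⟩ := exists_eq_add_smul_of_wedge_eq D'.right_apply_ne_zero hwedge
  rw [left, left, right, hrest, hrun₂, ← map_smul, ← map_add] at hc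
  replace hc := shearWord_injective _ hc
  have hn_apply (E : LeadingBlock K n m) :
      shearWord n E.run₁ (Pi.single (n - 1) E.param) n = 0 := by
    rw [shearWord_apply_of_forall_ne, Pi.single_eq_of_ne (by omega)]
    intro x hx
    have := E.bounds_of_mem_run₁ hx
    omega
  have hc0 : c = 0 := by simpa [hn_apply] using (congrFun hc n).symm
  rw [hc0, zero_smul, add_zero] at hc
  exact eq_of_shearWord_run_single_eq (k := n - 1) (by omega) (by omega) (by omega)
    D.map_fst_run₁ D'.map_fst_run₁ D.run₁_ne_zero D.param_ne_zero hc

lemma word_eq (h : skewForm n D.word = skewForm n D'.word) (hrest : D.rest = D'.rest) :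
    D.word = D'.word := by
  have hwedge : wedge D.left D.right = wedge D'.left D'.right := by
    rwa [skewForm_word, skewForm_word, hrest, add_left_inj] at h
  have hrun₂ := run₂_eq hwedge hrest
  obtain ⟨hparam, hrun₁⟩ := param_eq_and_run₁_eq hwedge hrest hrun₂
  rw [word, word, hparam, hrun₁, hrun₂, hrest]

lemma exists_word_eq {L : List (ℕ × K)} (hm : m < n / 2) (hL : L.map Prod.fst = wordTail n m)
    (hL0 : ∀ x ∈ L, x.2 ≠ 0) : ∃ D : LeadingBlock K n m, D.word = L := by
  rw [wordTail_of_lt hm, wordBlock, List.cons_append, List.append_assoc] at hL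
  obtain ⟨⟨_, t⟩, _, rfl, rfl, hL⟩ := List.map_eq_cons_iff.1 hL
  obtain ⟨L₁, _, rfl, hL₁, hL⟩ := List.map_eq_append_iff.1 hL
  obtain ⟨L₂, L₃, rfl, hL₂, hL₃⟩ := List.map_eq_append_iff.1 hL
  simp only [List.forall_mem_cons, List.forall_mem_append] at hL0
  exact ⟨⟨t, L₁, L₂, L₃, hm, hL₁, hL₂, hL₃, hL0.1, hL0.2.1, hL0.2.2.1, hL0.2.2.2⟩, rfl⟩

end LeadingBlock

theorem eq_of_skewForm_eq {K : Type*} [Field K] {n m : ℕ} {L L' : List (ℕ × K)}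
    (hL : L.map Prod.fst = wordTail n m) (hL' : L'.map Prod.fst = wordTail n m)
    (hL0 : ∀ x ∈ L, x.2 ≠ 0) (hL0' : ∀ x ∈ L', x.2 ≠ 0) (h : skewForm n L = skewForm n L') :
    L = L' := by
  induction hd : n / 2 - m generalizing m L L' with
  | zero =>
    rw [wordTail_of_le (Nat.sub_eq_zero_iff_le.1 hd), List.map_eq_nil_iff] at hL hL'
    rw [hL, hL']
  | succ d ih =>
    obtain ⟨D, rfl⟩ := LeadingBlock.exists_word_eq (by omega) hL hL0
    obtain ⟨D', rfl⟩ := LeadingBlock.exists_word_eq (by omega) hL' hL0'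
    exact LeadingBlock.word_eq h <| ih D.map_fst_rest D'.map_fst_rest D.rest_ne_zero
      D'.rest_ne_zero (LeadingBlock.skewForm_rest_eq h) (by omega)

end Injectivity

section MatrixOfWord

section CommRing

variable {R : Type*} [CommRing R] (n : ℕ)

/-- The coordinates `1, …, n` of a vector, as a vector indexed by `Fin n`. -/
def truncate (v : ℕ → R) : Fin n → R :=
  fun p => v (p + 1)

/-- The coordinates of a form with indices in `1, …, n`, as a matrix indexed by `Fin n`. -/
def formMatrix (B : ℕ → ℕ → R) : Matrix (Fin n) (Fin n) R :=
  Matrix.of fun p q => B (p + 1) (q + 1)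

/-- The upper left block `1 + t E_{i,i+1}` of `x_i(t)`; it is the identity unless `1 ≤ i < n`. -/
def shearMatrix (i : ℕ) (t : R) : Matrix (Fin n) (Fin n) R :=
  if h : 1 ≤ i ∧ i < n then
    transvection ⟨i - 1, lt_of_le_of_lt (Nat.sub_le i 1) h.2⟩ ⟨i, h.2⟩ t
  else 1

/-- The matrix of `shearWord n L` on the coordinates `1, …, n`. -/
def shearWordMatrix : List (ℕ × R) → Matrix (Fin n) (Fin n) R
  | [] => 1
  | x :: L => shearWordMatrix L * shearMatrix n x.1 (-x.2)

variable {n}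

lemma shearMatrix_of_le {i : ℕ} (hi : n ≤ i) (t : R) : shearMatrix n i t = 1 :=
  dif_neg fun h => h.2.not_ge hi

lemma shearMatrix_apply (i : ℕ) (t : R) (p q : Fin n) :
    shearMatrix n i t p q =
      (if (p : ℕ) = q then 1 else 0) + if (p : ℕ) + 1 = i ∧ (q : ℕ) = i then t else 0 := by
  rw [shearMatrix]
  split_ifs <;> simp only [transvection, Matrix.add_apply, one_apply, single_apply, Fin.ext_iff] <;>
    split_ifs <;> first | omega | simp

lemma shearMatrix_mul_shearMatrix_neg (i : ℕ) (t : R) :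
    shearMatrix n i t * shearMatrix n i (-t) = 1 := by
  rw [shearMatrix, shearMatrix]
  split_ifs with h
  · rw [transvection_mul_transvection_same _ _ (by simp only [ne_eq, Fin.mk.injEq]; omega),
      add_neg_cancel, transvection_zero]
  · exact one_mul 1

lemma shearMatrix_neg_mulVec_truncate (i : ℕ) (t : R) (v : ℕ → R) :
    shearMatrix n i (-t) *ᵥ truncate n v = truncate n (shear n i t v) := by
  ext p
  rw [shearMatrix, truncate, shear_apply]
  split_ifs with h hp hp
  · obtain rfl := hp.2
    simp [transvection, add_mulVec, Matrix.single_mulVec, truncate, sub_eq_add_neg]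
  · have hpi : (p : ℕ) ≠ i - 1 := by omega
    simp [transvection, add_mulVec, Matrix.single_mulVec, truncate, Fin.ext_iff, hpi]
  · omega
  · rw [one_mulVec, truncate, sub_zero]

lemma shearWordMatrix_mulVec_truncate (L : List (ℕ × R)) (v : ℕ → R) :
    shearWordMatrix n L *ᵥ truncate n v = truncate n (shearWord n L v) := by
  induction L generalizing v with
  | nil => exact one_mulVec _
  | cons x L ih =>
    rw [shearWordMatrix, ← mulVec_mulVec, shearMatrix_neg_mulVec_truncate, ih, shearWord_cons]

lemma formMatrix_add (B C : ℕ → ℕ → R) : formMatrix n (B + C) = formMatrix n B + formMatrix n C :=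
  rfl

lemma formMatrix_wedge (u y : ℕ → R) :
    formMatrix n (wedge u y) = vecMulVec (truncate n u) (truncate n y) -
      vecMulVec (truncate n y) (truncate n u) := by
  ext p q
  simp only [formMatrix, wedge, truncate, of_apply, Matrix.sub_apply, vecMulVec_apply]
  ring

lemma formMatrix_wedge_shearWord (L : List (ℕ × R)) (u y : ℕ → R) :
    formMatrix n (wedge (shearWord n L u) (shearWord n L y)) =
      shearWordMatrix n L * formMatrix n (wedge u y) * (shearWordMatrix n L)ᵀ := by
  simp only [formMatrix_wedge, mul_sub, sub_mul, mul_vecMulVec, vecMulVec_mul, vecMul_transpose,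
    shearWordMatrix_mulVec_truncate]

lemma shearMatrix_mul_mul_formMatrix_skewForm_cons {X : Matrix (Fin n) (Fin n) R}
    {L : List (ℕ × R)} (hX : X * shearWordMatrix n L = 1) (x : ℕ × R) :
    shearMatrix n x.1 x.2 * X * formMatrix n (skewForm n (x :: L)) =
      shearMatrix n x.1 x.2 * (X * formMatrix n (skewForm n L)) +
        (if x.1 < n then 0 else formMatrix n (wedge (Pi.single (n - 1) x.2) (Pi.single n 1))) *
          (shearWordMatrix n L)ᵀ := by
  split_ifs with hx
  · rw [skewForm_cons_of_lt hx, zero_mul, add_zero, Matrix.mul_assoc]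
  · rw [not_lt] at hx
    rw [skewForm_cons_of_le hx, shearMatrix_of_le hx, one_mul, one_mul, formMatrix_add, mul_add,
      add_comm, formMatrix_wedge_shearWord, Matrix.mul_assoc (shearWordMatrix n L),
      ← Matrix.mul_assoc X, hX, one_mul]

end CommRing

variable {n : ℕ}

/-- The splitting of the index set of `x_i(t)` into two blocks of size `n`. -/
def blockEquiv (n : ℕ) : Fin n ⊕ Fin n ≃ Fin (2 * n) :=
  finSumFinEquiv.trans (finCongr (two_mul n).symm)

lemma xMat_submatrix_blockEquiv {i : ℕ} (hi : 1 ≤ i) (hn : 2 ≤ n) (t : ℝ) :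
    (xMat n i t).submatrix (blockEquiv n) (blockEquiv n) =
      fromBlocks (shearMatrix n i t)
        (if i < n then 0 else formMatrix n (wedge (Pi.single (n - 1) t) (Pi.single n 1)))
        0 (shearMatrix n i (-t))ᵀ := by
  have hl (p : Fin n) : (blockEquiv n (.inl p) : ℕ) = p := rfl
  have hr (p : Fin n) : (blockEquiv n (.inr p) : ℕ) = n + p := rfl
  ext (p | p) (q | q) <;> have := p.isLt <;> have := q.isLt <;>
    simp only [submatrix_apply, xMat, of_apply, hl, hr, fromBlocks_apply₁₁, fromBlocks_apply₁₂,
      fromBlocks_apply₂₁, fromBlocks_apply₂₂, transpose_apply, Matrix.zero_apply, shearMatrix_apply]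
  case inl.inr =>
    by_cases hin : i < n <;>
      simp only [hin, if_true, if_false, Matrix.zero_apply, formMatrix, of_apply, wedge,
        Pi.single_apply] <;>
      split_ifs <;> first | omega | simp
  all_goals split_ifs <;> first | omega | simp

theorem exists_prod_xMat_submatrix_blockEquiv (hn : 2 ≤ n) {L : List (ℕ × ℝ)}
    (hL : ∀ x ∈ L, 1 ≤ x.1) :
    ∃ X, X * shearWordMatrix n L = 1 ∧
      ((L.map fun x => xMat n x.1 x.2).prod).submatrix (blockEquiv n) (blockEquiv n) =
        fromBlocks X (X * formMatrix n (skewForm n L)) 0 (shearWordMatrix n L)ᵀ := by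
  induction L with
  | nil =>
    refine ⟨1, one_mul 1, ?_⟩
    have hform : formMatrix n (skewForm n ([] : List (ℕ × ℝ))) = 0 := rfl
    simp [hform, shearWordMatrix, submatrix_one_equiv]
  | cons x L ih =>
    rw [List.forall_mem_cons] at hL
    obtain ⟨X, hX, hprod⟩ := ih hL.2
    refine ⟨shearMatrix n x.1 x.2 * X, ?_, ?_⟩
    · rw [shearWordMatrix, Matrix.mul_assoc, ← Matrix.mul_assoc X, hX, Matrix.one_mul,
        shearMatrix_mul_shearMatrix_neg]
    · rw [List.map_cons, List.prod_cons, ← submatrix_mul_equiv _ _ _ (blockEquiv n), hprod,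
        xMat_submatrix_blockEquiv hL.1 hn, fromBlocks_multiply]
      rw [shearMatrix_mul_mul_formMatrix_skewForm_cons hX, shearWordMatrix, transpose_mul]
      simp

end MatrixOfWord

section Parametrization

variable {R : Type*} {n : ℕ}

/-- The index sequence `wordD n` with the parameters `t 0, t 1, …` attached to its letters. -/
def paramWord (n : ℕ) (t : ℕ → R) : List (ℕ × R) :=
  (List.range (Npar n)).map fun l => ((wordD n).getD l 0, t l)

lemma map_fst_paramWord (t : ℕ → R) : (paramWord n t).map Prod.fst = wordTail n 0 := by
  rw [wordTail_zero]
  refine List.ext_getElem (by simp [paramWord, length_wordD]) fun l _ hl => ?_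
  simp [paramWord, hl]

lemma map_paramWord {R' : Type*} (φ : R → R') (t : ℕ → R) :
    (paramWord n t).map (Prod.map id φ) = paramWord n (φ ∘ t) := by
  rw [paramWord, List.map_map]
  rfl

lemma paramWord_eq_iff {t t' : ℕ → R} :
    paramWord n t = paramWord n t' ↔ ∀ l < Npar n, t l = t' l := by
  simp [paramWord, List.map_inj_left]

lemma forall_mem_paramWord_snd {t : ℕ → R} {P : R → Prop} :
    (∀ x ∈ paramWord n t, P x.2) ↔ ∀ l < Npar n, P (t l) := by
  simp [paramWord]

lemma bounds_of_mem_paramWord {t : ℕ → R} {x : ℕ × R} (hx : x ∈ paramWord n t) :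
    1 ≤ x.1 ∧ x.1 ≤ n := by
  have := bounds_of_mem_wordTail (map_fst_paramWord t ▸ List.mem_map_of_mem (f := Prod.fst) hx)
  omega

lemma skewForm_paramWord_apply_eq_zero [CommRing R] (hn : 2 ≤ n) (t : ℕ → R) {p : ℕ}
    (hp : p ∉ Set.Icc 1 n) : skewForm n (paramWord n t) p = 0 := by
  refine skewForm_apply_eq_zero (fun x hx => ?_) hp
  have := bounds_of_mem_paramWord hx
  simp only [Set.mem_Icc]
  omega

lemma skewForm_paramWord_eq_of_formMatrix_eq [CommRing R] (hn : 2 ≤ n) {t t' : ℕ → R}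
    (h : formMatrix n (skewForm n (paramWord n t)) = formMatrix n (skewForm n (paramWord n t'))) :
    skewForm n (paramWord n t) = skewForm n (paramWord n t') := by
  ext p q
  by_cases hp : p ∈ Set.Icc 1 n
  · by_cases hq : q ∈ Set.Icc 1 n
    · have hpq := congrFun₂ h ⟨p - 1, by grind⟩ ⟨q - 1, by grind⟩
      simpa only [formMatrix, of_apply, Nat.sub_add_cancel hp.1, Nat.sub_add_cancel hq.1] using hpq
    · rw [skewForm_swap, skewForm_swap _ q, skewForm_paramWord_apply_eq_zero hn t hq,
        skewForm_paramWord_apply_eq_zero hn t' hq]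
  · rw [skewForm_paramWord_apply_eq_zero hn t hp, skewForm_paramWord_apply_eq_zero hn t' hp]

theorem Amat_eq_formMatrix_skewForm (hn : 2 ≤ n) (t : ℕ → ℝ) :
    Amat n t = formMatrix n (skewForm n (paramWord n t)) := by
  have hprodX : prodX n t = ((paramWord n t).map fun x => xMat n x.1 x.2).prod := by
    rw [prodX, paramWord, List.map_map]
    rfl
  obtain ⟨X, hX, hblocks⟩ := exists_prod_xMat_submatrix_blockEquiv hn
    fun x (hx : x ∈ paramWord n t) => (bounds_of_mem_paramWord hx).1
  rw [← hprodX] at hblocks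
  have hX1 : X1 n t = X := congrArg toBlocks₁₁ hblocks
  have hX2 : X2 n t = X * formMatrix n (skewForm n (paramWord n t)) :=
    congrArg toBlocks₁₂ hblocks
  rw [Amat, hX1, hX2, nonsing_inv_mul_cancel_left _ _ (isUnit_det_of_right_inverse hX)]

lemma transpose_Amat (hn : 2 ≤ n) (t : ℕ → ℝ) : (Amat n t)ᵀ = -Amat n t := by
  rw [Amat_eq_formMatrix_skewForm hn]
  ext p q
  exact skewForm_swap _ _ _

theorem eq_of_Amat_eq (hn : 2 ≤ n) {t t' : ℕ → ℝ} (ht : ∀ l < Npar n, t l ≠ 0)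
    (ht' : ∀ l < Npar n, t' l ≠ 0) (h : Amat n t = Amat n t') : ∀ l < Npar n, t l = t' l := by
  rw [Amat_eq_formMatrix_skewForm hn, Amat_eq_formMatrix_skewForm hn] at h
  exact paramWord_eq_iff.1 <| eq_of_skewForm_eq (map_fst_paramWord t) (map_fst_paramWord t')
    (forall_mem_paramWord_snd (P := (· ≠ 0)) |>.2 ht)
    (forall_mem_paramWord_snd (P := (· ≠ 0)) |>.2 ht')
    (skewForm_paramWord_eq_of_formMatrix_eq hn h)

/-- The entry of `A(t)` in position `(p, q)` as a polynomial in the parameters. -/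
def entryPoly (n : ℕ) (p q : Fin n) : MvPolynomial (Fin (Npar n)) ℝ :=
  formMatrix n (skewForm n (paramWord n (Function.extend Fin.val MvPolynomial.X 0))) p q

lemma eval_entryPoly (hn : 2 ≤ n) (t : Fin (Npar n) → ℝ) (p q : Fin n) :
    MvPolynomial.eval t (entryPoly n p q) = Amat n (Function.extend Fin.val t 0) p q := by
  have hparam : MvPolynomial.eval t ∘ Function.extend Fin.val MvPolynomial.X 0 =
      Function.extend Fin.val t 0 := by
    ext l
    rw [Function.comp_apply, Function.apply_extend (MvPolynomial.eval t)]
    congr 1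
    ext
    simp
  rw [Amat_eq_formMatrix_skewForm hn, entryPoly, formMatrix, of_apply, map_skewForm, map_paramWord,
    hparam]
  rfl

lemma eval_bind₁_entryPoly (hn : 2 ≤ n) (t : Fin (Npar n) → ℝ)
    (g : MvPolynomial { pq : Fin n × Fin n // pq.1 < pq.2 } ℝ) :
    MvPolynomial.eval t (MvPolynomial.bind₁ (fun v => entryPoly n v.1.1 v.1.2) g) =
      MvPolynomial.eval (fun v => Amat n (Function.extend Fin.val t 0) v.1.1 v.1.2) g := by
  simp only [← eval_entryPoly hn]
  exact MvPolynomial.eval₂Hom_bind₁ _ _ _ _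

end Parametrization

/-- No family of fewer than `n(n-1)/2` polynomials in the above-diagonal
entries of a skew-symmetric matrix can test membership in `S_n^{>0}` by positivity. -/
theorem no_smaller_positivity_test (n : ℕ) (hn : 2 ≤ n) :
    ¬ ∃ r : ℕ, r < Npar n ∧
      ∃ f : Fin r → MvPolynomial { pq : Fin n × Fin n // pq.1 < pq.2 } ℝ,
        ∀ A : Matrix (Fin n) (Fin n) ℝ, Aᵀ = -A →
          (A ∈ Spos n ↔
            ∀ i : Fin r, 0 < MvPolynomial.eval (fun v => A v.1.1 v.1.2) (f i)) := by
  rintro ⟨r, hr, f, hf⟩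
  let A (t : Fin (Npar n) → ℝ) := Amat n (Function.extend Fin.val t 0)
  have hA_mem (t) : A t ∈ Spos n ↔ ∀ i, 0 < MvPolynomial.eval (fun v => A t v.1.1 v.1.2) (f i) :=
    hf (A t) (transpose_Amat hn _)
  let F (i : Fin r) := MvPolynomial.bind₁ (fun v => entryPoly n v.1.1 v.1.2) (f i)
  have heval (t i) :
      MvPolynomial.eval t (F i) = MvPolynomial.eval (fun v => A t v.1.1 v.1.2) (f i) :=
    eval_bind₁_entryPoly hn t (f i)
  have hextend (t : Fin (Npar n) → ℝ) (l) (hl : l < Npar n) :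
      Function.extend Fin.val t 0 l = t ⟨l, hl⟩ :=
    Fin.val_injective.extend_apply t 0 ⟨l, hl⟩
  have hpos (t : Fin (Npar n) → ℝ) (ht : ∀ j, 0 < t j) (i) : 0 < MvPolynomial.eval t (F i) := by
    rw [heval]
    exact (hA_mem t).1 ⟨_, fun l hl => (hextend t l hl).symm ▸ ht _, rfl⟩ i
  obtain ⟨t, ht0, ⟨j, hj⟩, ht⟩ := exists_neg_coord_forall_eval_pos (by simpa using hr) F hpos
  obtain ⟨s, hs, hAs⟩ := (hA_mem t).2 fun i => heval t i ▸ ht i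
  have hts : t j = s j := hextend t j j.2 ▸ eq_of_Amat_eq hn
    (fun l hl => (hextend t l hl).symm ▸ ht0 _) (fun l hl => (hs l hl).ne') hAs j j.2
  exact absurd (hs j j.2) (hts ▸ hj.not_gt)
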